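/- Let G be a triangle-critical claw-free graph with chromatic number χ(G) = 8 that is not isomorphic to K_8. Then for every triangle T of G, the common neighborhood N(T) has exactly 5 vertices and the induced subgraph G[N(T)] is isomorphic to the 5-cycle C_5. -/

import Mathlib

/-!
Write `H` for the graph induced on the common neighbourhood of the triangle `T`.

* `H` has at least five vertices: take a 5-colouring of `G - T`. If some colour class contained no
  common neighbour of `T`, each of its vertices could take the colour of a non-neighbour in `T`,
  and `G` would be 7-colourable (`exists_common_neighbor`).
* `H` has no three pairwise non-adjacent vertices, as `G` is claw-free.
* `H` has no triangle, since `G` has no `K_6` (`no_six`). Indeed, let `S` be a `K_6`. Then `G - S`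
  is triangle-free, because removing a triangle leaves a 5-colourable graph, so by claw-freeness
  every vertex outside `S` has at most two neighbours outside `S`. Vertex-criticality makes all
  degrees at least 7, hence each `v ∉ S` misses at most one vertex of `S`; it misses exactly one,
  `f v`, as `G` has no `K_7` (`no_seven`). For adjacent `u, v ∉ S` one has `f u ≠ f v`, since
  otherwise `S - f u + u + v` is a `K_7`. So colouring `v ∉ S` by `f v` is a proper colouring of
  `G` with six colours, which is absurd.

A graph on at least five vertices without triangles and without independent triples is `C_5`
(`exists_pentagon`): all degrees and co-degrees are at most two.
-/

open SimpleGraph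

/-- A graph `G` is `K_ℓ`-critical if it contains `K_ℓ` as a subgraph, deleting any vertex
drops the chromatic number by one, and deleting the vertex set of any copy of `K_ℓ`
drops the chromatic number by `ℓ`. -/
def IsKCritical {V : Type*} (G : SimpleGraph V) (ℓ : ℕ) : Prop :=
  (∃ s : Finset V, G.IsNClique ℓ s) ∧
  (∀ v : V, (G.induce ({v}ᶜ : Set V)).chromaticNumber + 1 = G.chromaticNumber) ∧
  (∀ s : Finset V, G.IsNClique ℓ s →
    (G.induce ((↑s : Set V)ᶜ)).chromaticNumber + (ℓ : ℕ∞) = G.chromaticNumber)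

/-- A graph is claw-free if it has no induced subgraph isomorphic to `K_{1,3}`. -/
def ClawFree {V : Type*} (G : SimpleGraph V) : Prop :=
  ¬ ∃ a b c d : V, b ≠ c ∧ b ≠ d ∧ c ≠ d ∧
    G.Adj a b ∧ G.Adj a c ∧ G.Adj a d ∧ ¬ G.Adj b c ∧ ¬ G.Adj b d ∧ ¬ G.Adj c d

/-! ### Colourings of induced subgraphs -/

section Colourings

variable {V : Type*} {G : SimpleGraph V}

lemma colorable_of_finset {α : Type*} (C : Finset α) (c : V → α) (hc : ∀ v, c v ∈ C)
    (h : ∀ u v, G.Adj u v → c u ≠ c v) : G.Colorable C.card := by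
  have := (SimpleGraph.Coloring.mk (G := G) (fun v => (⟨c v, hc v⟩ : C))
    (by intro u v huv he; exact h u v huv (by simpa using he))).colorable
  simpa using this

/-- A colouring of `G - s` with `n` colours, as a function on all of `V` whose values on `s` are
irrelevant. -/
lemma exists_partial_coloring {s : Set V} {n : ℕ} (h : (G.induce sᶜ).Colorable n) :
    ∃ c : V → ℕ, (∀ v, v ∉ s → c v < n) ∧
      ∀ u v, u ∉ s → v ∉ s → G.Adj u v → c u ≠ c v := by
  classical
  obtain ⟨C⟩ := h
  refine ⟨fun v => if hv : v ∈ s then 0 else (C ⟨v, hv⟩ : ℕ), ?_, ?_⟩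
  · intro v hv
    simp [hv]
  · intro u v hu hv huv
    have := C.valid (v := ⟨u, hu⟩) (w := ⟨v, hv⟩) (by simpa using huv)
    simpa [hu, hv, Fin.ext_iff] using this

lemma card_le_of_coloring {S : Finset V} (hS : G.IsClique (S : Set V)) {n : ℕ} (c : V → ℕ)
    (hc : ∀ v ∈ S, c v < n) (h : ∀ u ∈ S, ∀ v ∈ S, G.Adj u v → c u ≠ c v) : S.card ≤ n := by
  have := Finset.card_le_card_of_injOn (s := S) (t := Finset.range n) c
    (by intro v hv; simpa using hc v hv)
    (by
      intro u hu v hv he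
      by_contra hne
      exact h u hu v hv (hS hu hv hne) he)
  simpa using this

lemma colorable_of_chromaticNumber_add {W : Type*} {H : SimpleGraph W} {a n k : ℕ}
    (h : H.chromaticNumber + (a : ℕ∞) = k) (hk : k = n + a) : H.Colorable n := by
  rw [← SimpleGraph.chromaticNumber_le_iff_colorable]
  subst hk
  generalize H.chromaticNumber = x at h
  induction x using ENat.recTopCoe with
  | top =>
    norm_cast at h
  | coe m => norm_cast at h ⊢; omega

end Colourings

/-! ### Cliques in triangle-critical claw-free graphs -/

section Critical

variable {V : Type*} {G : SimpleGraph V}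

/-- If `T` is a triangle and no 7-colouring of `G` exists, then every colour class of a 5-colouring
of `G - T` contains a common neighbour of `T`. -/
lemma exists_common_neighbor (h7 : ¬ G.Colorable 7) {T : Finset V} (hT : T.card = 3)
    (c : V → ℕ) (hc : ∀ v, v ∉ T → c v < 5)
    (hp : ∀ u v, u ∉ T → v ∉ T → G.Adj u v → c u ≠ c v) (i : ℕ) (hi : i < 5) :
    ∃ v, v ∉ T ∧ c v = i ∧ ∀ u ∈ T, G.Adj u v := by
  classical
  by_contra hcon
  push Not at hcon
  have hex : ∀ v, ∃ t, v ∉ T → c v = i → t ∈ T ∧ ¬ G.Adj t v := by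
    intro v
    by_cases h : v ∉ T ∧ c v = i
    · obtain ⟨t, ht⟩ := hcon v h.1 h.2
      exact ⟨t, fun _ _ => ht⟩
    · exact ⟨v, fun h1 h2 => absurd ⟨h1, h2⟩ h⟩
  choose f hf using hex
  apply h7
  have hcard : (T.disjSum ((Finset.range 5).erase i)).card = 7 := by
    rw [Finset.card_disjSum, Finset.card_erase_of_mem (by simpa using hi), hT]
    simp
  rw [← hcard]
  refine colorable_of_finset (α := V ⊕ ℕ) _
    (fun v => if v ∈ T then Sum.inl v else if c v = i then Sum.inl (f v) else Sum.inr (c v)) ?_ ?_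
  · intro v
    have := hf v
    have := hc v
    by_cases h1 : v ∈ T <;> by_cases h2 : c v = i <;> simp_all
  · intro u v huv
    have := hf u
    have := hf v
    have := hp u v
    have := huv.symm
    have := huv.ne
    grind

/-- What is used of an 8-chromatic triangle-critical graph, in terms of colourings: `G` is not
7-colourable, `G` minus a vertex is 7-colourable, `G` minus a triangle is 5-colourable, and `G`
minus the ends `a, b` of an edge in a triangle `a b t` is 6-colourable. Colourings of a subgraph are
functions on all of `V` with irrelevant values on the deleted vertices. -/
structure Crit (G : SimpleGraph V) : Prop where
  not7 : ¬ G.Colorable 7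
  vert : ∀ v : V, ∃ c : V → ℕ, (∀ u, u ≠ v → c u < 7) ∧
    ∀ u w, u ≠ v → w ≠ v → G.Adj u w → c u ≠ c w
  tri : ∀ T : Finset V, G.IsNClique 3 T → ∃ c : V → ℕ, (∀ u, u ∉ T → c u < 5) ∧
    ∀ u w, u ∉ T → w ∉ T → G.Adj u w → c u ≠ c w
  edge : ∀ a b t : V, G.Adj a b → G.Adj a t → G.Adj b t →
    ∃ c : V → ℕ, (∀ u, u ≠ a → u ≠ b → c u < 6) ∧
    ∀ u w, u ≠ a → u ≠ b → w ≠ a → w ≠ b → G.Adj u w → c u ≠ c w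

lemma crit_of (hG : IsKCritical G 3) (hχ : G.chromaticNumber = 8) : Crit G := by
  classical
  obtain ⟨-, hv, ht⟩ := hG
  have htri : ∀ T : Finset V, G.IsNClique 3 T → ∃ c : V → ℕ, (∀ u, u ∉ T → c u < 5) ∧
      ∀ u w, u ∉ T → w ∉ T → G.Adj u w → c u ≠ c w := by
    intro T hT
    have h := ht T hT
    rw [hχ] at h
    have h5 : (G.induce ((T : Set V)ᶜ)).Colorable 5 :=
      colorable_of_chromaticNumber_add (a := 3) (k := 8) (by simpa using h) rfl
    simpa using exists_partial_coloring h5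
  refine ⟨?_, ?_, htri, ?_⟩
  · intro h
    have := SimpleGraph.chromaticNumber_le_iff_colorable.2 h
    rw [hχ] at this
    norm_cast at this
  · intro v
    have h := hv v
    rw [hχ] at h
    have h7 : (G.induce (({v} : Set V)ᶜ)).Colorable 7 :=
      colorable_of_chromaticNumber_add (a := 1) (k := 8) (by simpa using h) rfl
    simpa using exists_partial_coloring h7
  · intro a b t hab hat hbt
    obtain ⟨c, hc, hp⟩ := htri {a, b, t} (SimpleGraph.is3Clique_triple_iff.2 ⟨hab, hat, hbt⟩)
    simp only [Finset.mem_insert, Finset.mem_singleton, not_or] at hc hp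
    refine ⟨Function.update c t 5, ?_, ?_⟩
    · intro u hua hub
      by_cases hut : u = t
      · simp [hut]
      · have := hc u ⟨hua, hub, hut⟩
        simp [hut]; omega
    · intro u w hua hub hwa hwb huw
      have := huw.ne
      have := hc u
      have := hc w
      have := hp u w
      simp only [Function.update_apply]
      grind

/-- If every vertex outside `S` has a non-neighbour in `S`, chosen differently for adjacent
vertices, then `G` can be coloured by `S`. -/
lemma colorable_of_nonneighbor {S : Finset V} (f : V → V)
    (hf : ∀ v, v ∉ S → f v ∈ S ∧ ¬ G.Adj v (f v))
    (hfp : ∀ u v, u ∉ S → v ∉ S → G.Adj u v → f u ≠ f v) : G.Colorable S.card := by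
  classical
  refine colorable_of_finset S (fun v => if v ∈ S then v else f v) ?_ ?_
  · intro v
    have := hf v
    grind
  · intro u v huv
    have := hf u
    have := hf v
    have := hfp u v
    have := huv.symm
    have := huv.ne
    grind

variable [Fintype V]

lemma Crit.no_eight (h : Crit G) (hnc : IsEmpty (G ≃g completeGraph (Fin 8)))
    (S : Finset V) (hS : G.IsNClique 8 S) : False := by
  classical
  by_cases hall : ∀ v, v ∈ S
  · have huniv : S = Finset.univ := by ext; simp [hall]
    have hcard : Fintype.card V = 8 := by
      rw [← hS.card_eq, huniv, Finset.card_univ]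
    refine hnc.false ⟨Fintype.equivFinOfCardEq hcard, ?_⟩
    intro a b
    simp only [SimpleGraph.top_adj, ne_eq, EmbeddingLike.apply_eq_iff_eq]
    exact ⟨fun hne => hS.isClique (hall a) (hall b) hne, fun hab => hab.ne⟩
  · push Not at hall
    obtain ⟨v, hv⟩ := hall
    obtain ⟨c, hc, hp⟩ := h.vert v
    have := card_le_of_coloring hS.isClique c (n := 7) (fun u hu => hc u (by grind))
      (fun u hu w hw => hp u w (by grind) (by grind))
    rw [hS.card_eq] at this
    omega

lemma Crit.seven_le_degree [DecidableRel G.Adj] (h : Crit G) (v : V) :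
    7 ≤ (G.neighborFinset v).card := by
  classical
  obtain ⟨c, hc, hp⟩ := h.vert v
  have hsub : Finset.range 7 ⊆ (G.neighborFinset v).image c := by
    intro i hi
    by_contra hcon
    simp only [Finset.mem_image, SimpleGraph.mem_neighborFinset, not_exists, not_and] at hcon
    simp only [Finset.mem_range] at hi
    apply h.not7
    rw [← Finset.card_range 7]
    refine colorable_of_finset _ (Function.update c v i) ?_ ?_
    · intro u
      have := hc u
      simp only [Function.update_apply, Finset.mem_range]
      grind
    · intro u w huw
      have := hp u w
      have := hcon u
      have := hcon w
      have := huw.symm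
      have := huw.ne
      simp only [Function.update_apply]
      grind
  have h1 := Finset.card_le_card hsub
  have h2 := Finset.card_image_le (s := G.neighborFinset v) (f := c)
  simp at h1
  omega

/-- A vertex outside a `K_6` has at most two neighbours
outside it, hence at least five in it. -/
lemma Crit.five_le [DecidableEq V] [DecidableRel G.Adj] (h : Crit G) (hcf : ClawFree G)
    {S : Finset V} (hS : G.IsNClique 6 S) {v : V} (hv : v ∉ S) :
    5 ≤ (S.filter (G.Adj v)).card := by
  have hdeg := h.seven_le_degree v
  have hout : (G.neighborFinset v \ S).card ≤ 2 := by
    by_contra hcon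
    push Not at hcon
    obtain ⟨a, b, c, ha, hb, hc, hab, hac, hbc⟩ := Finset.two_lt_card_iff.1 hcon
    simp only [Finset.mem_sdiff, SimpleGraph.mem_neighborFinset] at ha hb hc
    have key : ∀ x y, G.Adj v x → x ∉ S → G.Adj v y → y ∉ S → ¬ G.Adj x y := by
      intro x y hx hxS hy hyS hxy
      obtain ⟨c, hc, hp⟩ := h.tri {v, x, y} (SimpleGraph.is3Clique_triple_iff.2 ⟨hx, hy, hxy⟩)
      have hd : ∀ u ∈ S, u ∉ ({v, x, y} : Finset V) := by
        intro u hu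
        simp only [Finset.mem_insert, Finset.mem_singleton]
        grind
      have := card_le_of_coloring hS.isClique c (n := 5) (fun u hu => hc u (hd u hu))
        (fun u hu w hw => hp u w (hd u hu) (hd w hw))
      rw [hS.card_eq] at this
      omega
    exact hcf ⟨v, a, b, c, hab, hac, hbc, ha.1, hb.1, hc.1, key a b ha.1 ha.2 hb.1 hb.2,
      key a c ha.1 ha.2 hc.1 hc.2, key b c hb.1 hb.2 hc.1 hc.2⟩
  have hin : G.neighborFinset v ∩ S = S.filter (G.Adj v) := by
    ext u; simp [and_comm]
  have := Finset.card_sdiff_add_card_inter (G.neighborFinset v) S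
  rw [hin] at this
  omega

/-- Each of two vertices outside a `K_6` misses at most one of its vertices, so they have a common
neighbour in it. -/
lemma Crit.exists_common (h : Crit G) (hcf : ClawFree G)
    {S : Finset V} (hS : G.IsNClique 6 S) {u v : V} (hu : u ∉ S) (hv : v ∉ S) :
    ∃ t ∈ S, G.Adj u t ∧ G.Adj v t := by
  classical
  have h1 := h.five_le hcf hS hu
  have h2 := h.five_le hcf hS hv
  have h3 := Finset.card_union_add_card_inter (S.filter (G.Adj u)) (S.filter (G.Adj v))
  have h4 : (S.filter (G.Adj u) ∪ S.filter (G.Adj v)).card ≤ 6 := by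
    rw [← hS.card_eq]
    exact Finset.card_le_card (by intro x; simp; tauto)
  obtain ⟨t, ht⟩ := Finset.card_pos.1
    (show 0 < (S.filter (G.Adj u) ∩ S.filter (G.Adj v)).card by omega)
  simp only [Finset.mem_inter, Finset.mem_filter] at ht
  exact ⟨t, ht.1.1, ht.1.2, ht.2.2⟩

/-- An edge outside a `K_7` lies in a triangle, so its removal leaves a 6-colourable graph
containing `K_7`. Hence the vertices outside a `K_7` are independent, and each can be coloured by
a non-neighbour in the `K_7`. -/
lemma Crit.no_seven (h : Crit G) (hcf : ClawFree G)
    (hnc : IsEmpty (G ≃g completeGraph (Fin 8)))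
    (S : Finset V) (hS : G.IsNClique 7 S) : False := by
  classical
  have hex : ∀ v, ∃ t, v ∉ S → t ∈ S ∧ ¬ G.Adj v t := by
    intro v
    by_contra hcon
    push Not at hcon
    exact h.no_eight hnc _ (hS.insert (a := v) fun b hb => (hcon b).2 hb)
  choose f hf using hex
  apply h.not7
  rw [← hS.card_eq]
  refine colorable_of_nonneighbor f hf ?_
  intro u v hu hv huv
  exfalso
  obtain ⟨x, hx⟩ := Finset.card_pos.1 (show 0 < S.card by rw [hS.card_eq]; omega)
  have hS6 : G.IsNClique 6 (S.erase x) := hS.erase_of_mem hx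
  obtain ⟨t, ht, hut, hvt⟩ := h.exists_common hcf hS6 (u := u) (v := v)
    (fun hh => hu (Finset.mem_of_mem_erase hh)) (fun hh => hv (Finset.mem_of_mem_erase hh))
  obtain ⟨c, hc, hp⟩ := h.edge u v t huv hut hvt
  have hne : ∀ w ∈ S, w ≠ u ∧ w ≠ v := by grind
  have := card_le_of_coloring hS.isClique c (n := 6)
    (fun w hw => hc w (hne w hw).1 (hne w hw).2)
    (fun w hw w' hw' => hp w w' (hne w hw).1 (hne w hw).2 (hne w' hw').1 (hne w' hw').2)
  rw [hS.card_eq] at this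
  omega

lemma Crit.no_six (h : Crit G) (hcf : ClawFree G)
    (hnc : IsEmpty (G ≃g completeGraph (Fin 8)))
    (S : Finset V) (hS : G.IsNClique 6 S) : False := by
  classical
  have hex : ∀ v, ∃ t, v ∉ S → t ∈ S ∧ ¬ G.Adj v t := by
    intro v
    by_contra hcon
    push Not at hcon
    exact h.no_seven hcf hnc _ (hS.insert (a := v) fun b hb => (hcon b).2 hb)
  choose f hf using hex
  -- `f v` is the only non-neighbour of `v` in `S`.
  have huniq : ∀ v, v ∉ S → ∀ t ∈ S, t ≠ f v → G.Adj v t := by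
    intro v hv t ht htf
    by_contra hadj
    have h5 := h.five_le hcf hS hv
    have hsub : S.filter (G.Adj v) ⊆ (S.erase (f v)).erase t := by
      intro x hx
      have := (hf v hv).2
      simp only [Finset.mem_filter] at hx
      simp only [Finset.mem_erase]
      grind
    have h4 := Finset.card_le_card hsub
    rw [Finset.card_erase_of_mem (by simp [ht, htf]), Finset.card_erase_of_mem (hf v hv).1,
      hS.card_eq] at h4
    omega
  have h6 : G.Colorable S.card := by
    refine colorable_of_nonneighbor f hf ?_
    intro u v hu hv huv hfe
    have hS5 : G.IsNClique 5 (S.erase (f u)) := hS.erase_of_mem (hf u hu).1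
    have hS6 := hS5.insert (a := v) (fun b hb => huniq v hv b (Finset.mem_of_mem_erase hb)
      (by rw [← hfe]; exact Finset.ne_of_mem_erase hb))
    refine h.no_seven hcf hnc _ (hS6.insert (a := u) (fun b hb => ?_))
    rcases Finset.mem_insert.1 hb with rfl | hb
    · exact huv
    · exact huniq u hu b (Finset.mem_of_mem_erase hb) (Finset.ne_of_mem_erase hb)
  rw [hS.card_eq] at h6
  exact h.not7 (h6.mono (by omega))

end Critical

/-! ### Ramsey characterization of the 5-cycle -/

section Pentagon

variable {W : Type*} [Fintype W]

/-- A graph on at least five vertices in which no three vertices are pairwise adjacent or pairwise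
non-adjacent is the 5-cycle. -/
lemma exists_pentagon (H : SimpleGraph W) (hcard : 5 ≤ Fintype.card W)
    (h3 : ∀ a b c, H.Adj a b → H.Adj a c → ¬ H.Adj b c)
    (hi : ∀ a b c, a ≠ b → a ≠ c → b ≠ c → ¬ H.Adj a b → ¬ H.Adj a c → H.Adj b c) :
    Fintype.card W = 5 ∧ Nonempty (H ≃g cycleGraph 5) := by
  classical
  have hN : ∀ v, (H.neighborFinset v).card ≤ 2 := by
    intro v
    by_contra hcon
    push Not at hcon
    obtain ⟨a, b, c, ha, hb, hc, hab, hac, hbc⟩ := Finset.two_lt_card_iff.1 hcon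
    simp only [SimpleGraph.mem_neighborFinset] at ha hb hc
    exact h3 v b c hb hc (hi a b c hab hac hbc (h3 v a b ha hb) (h3 v a c ha hc))
  have hM : ∀ v, ((Finset.univ.erase v) \ H.neighborFinset v).card ≤ 2 := by
    intro v
    by_contra hcon
    push Not at hcon
    obtain ⟨a, b, c, ha, hb, hc, hab, hac, hbc⟩ := Finset.two_lt_card_iff.1 hcon
    simp only [Finset.mem_sdiff, Finset.mem_erase, SimpleGraph.mem_neighborFinset] at ha hb hc
    exact h3 a b c (hi v a b (Ne.symm ha.1.1) (Ne.symm hb.1.1) hab ha.2 hb.2)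
      (hi v a c (Ne.symm ha.1.1) (Ne.symm hc.1.1) hac ha.2 hc.2)
      (hi v b c (Ne.symm hb.1.1) (Ne.symm hc.1.1) hbc hb.2 hc.2)
  have hsum : ∀ v, ((Finset.univ.erase v) \ H.neighborFinset v).card + (H.neighborFinset v).card
      + 1 = Fintype.card W := by
    intro v
    rw [Finset.card_sdiff_add_card_eq_card (by
      intro x hx
      simp only [SimpleGraph.mem_neighborFinset] at hx
      simp [hx.ne']), Finset.card_erase_of_mem (Finset.mem_univ v), Finset.card_univ]
    omega
  obtain ⟨v⟩ : Nonempty W := Fintype.card_pos_iff.1 (by omega)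
  have hc5 : Fintype.card W = 5 := by
    have := hN v; have := hM v; have := hsum v; omega
  refine ⟨hc5, ?_⟩
  have hdeg : ∀ v, (H.neighborFinset v).card = 2 := by
    intro v
    have := hN v; have := hM v; have := hsum v; omega
  -- Follow the cycle `d, a, v, b, e` starting from `v` in both directions.
  obtain ⟨a, b, hab, hvab⟩ := Finset.card_eq_two.1 (hdeg v)
  have hva : H.Adj v a := by rw [← SimpleGraph.mem_neighborFinset, hvab]; simp
  have hvb : H.Adj v b := by rw [← SimpleGraph.mem_neighborFinset, hvab]; simp
  have next : ∀ x y, H.Adj x y → ∃ z, z ≠ y ∧ H.Adj x z := by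
    intro x y hxy
    obtain ⟨z, hz, hzy⟩ := Finset.exists_mem_ne (s := H.neighborFinset x)
      (by rw [hdeg]; omega) y
    exact ⟨z, hzy, by simpa using hz⟩
  obtain ⟨d, hdv, had⟩ := next a v hva.symm
  obtain ⟨e, hev, hbe⟩ := next b v hvb.symm
  have hab' : ¬ H.Adj a b := h3 v a b hva hvb
  have hvd : ¬ H.Adj v d := h3 a v d hva.symm had
  have hve : ¬ H.Adj v e := h3 b v e hvb.symm hbe
  have hdb : d ≠ b := by rintro rfl; exact hab' had
  have hea : e ≠ a := by rintro rfl; exact hab' hbe.symm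
  have hde : d ≠ e := by
    -- If `d` were adjacent to both `a` and `b`, the neighbours of `a` and of `b` would be exactly
    -- `v` and `d`, so the fifth vertex `w` would form an independent triple with `a` and `b`.
    rintro rfl
    obtain ⟨w, hw⟩ : ∃ w, w ∉ ({v, a, b, d} : Finset W) := by
      by_contra hcon
      push Not at hcon
      have h1 := Finset.card_le_card (show Finset.univ ⊆ ({v, a, b, d} : Finset W) from
        fun x _ => hcon x)
      have h2 := Finset.card_le_four (a := v) (b := a) (c := b) (d := d)
      rw [Finset.card_univ] at h1
      omega
    simp only [Finset.mem_insert, Finset.mem_singleton, not_or] at hw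
    have two : ∀ x y z, y ≠ z → H.Adj x y → H.Adj x z → ∀ w, w ≠ y → w ≠ z → ¬ H.Adj x w := by
      intro x y z hyz hy hz w hwy hwz hw
      have : ({y, z, w} : Finset W) ⊆ H.neighborFinset x := by
        intro t ht
        simp only [Finset.mem_insert, Finset.mem_singleton] at ht
        rw [SimpleGraph.mem_neighborFinset]
        grind
      have h1 := Finset.card_le_card this
      rw [hdeg, Finset.card_eq_three.2 ⟨y, z, w, hyz, hwy.symm, hwz.symm, rfl⟩] at h1
      omega
    have haw := two a v d hdv.symm hva.symm had w hw.1 hw.2.2.2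
    have hbw := two b v d hdv.symm hvb.symm hbe w hw.1 hw.2.2.2
    exact hbw (hi a b w hab (Ne.symm hw.2.1) (Ne.symm hw.2.2.1) hab' haw)
  have hde' : H.Adj d e := hi v d e (Ne.symm hdv) (Ne.symm hev) hde hvd hve
  have hae : ¬ H.Adj a e := fun hh => h3 d a e had.symm hde' hh
  have hbd : ¬ H.Adj b d := fun hh => h3 e b d hbe.symm hde'.symm hh
  let g : Fin 5 → W := ![d, a, v, b, e]
  have hg : Function.Injective g := by
    have := hva.ne
    have := hvb.ne
    have := had.ne
    have := hbe.ne
    intro i j hij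
    fin_cases i <;> fin_cases j <;> simp [g] at hij ⊢ <;> grind
  have hgb : Function.Bijective g :=
    (Fintype.bijective_iff_injective_and_card g).2 ⟨hg, by simp [hc5]⟩
  refine ⟨(SimpleGraph.Iso.symm ⟨Equiv.ofBijective g hgb, ?_⟩)⟩
  have e1 : ∀ i j, (cycleGraph 5).Adj i j ↔ i - j = 1 ∨ j - i = 1 := by
    intro i j
    rw [SimpleGraph.cycleGraph_adj]
  intro i j
  rw [e1]
  have := hva.symm
  have := hvb.symm
  have := had.symm
  have := hbe.symm
  have := hde'.symm
  have : ¬ H.Adj b a := fun hh => hab' hh.symm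
  have : ¬ H.Adj d v := fun hh => hvd hh.symm
  have : ¬ H.Adj e v := fun hh => hve hh.symm
  have : ¬ H.Adj e a := fun hh => hae hh.symm
  have : ¬ H.Adj d b := fun hh => hbd hh.symm
  fin_cases i <;> fin_cases j <;> simp [g, *] <;> decide

end Pentagon

/-! ### Common neighbourhoods of triangles -/

theorem stmt15 {V : Type*} [Fintype V] (G : SimpleGraph V)
    (hG : IsKCritical G 3) (hcf : ClawFree G)
    (hχ : G.chromaticNumber = 8)
    (hnc : IsEmpty (G ≃g completeGraph (Fin 8)))
    (T : Finset V) (hT : G.IsNClique 3 T) :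
    ({v : V | ∀ u ∈ T, G.Adj u v}).ncard = 5 ∧
    Nonempty ((G.induce {v : V | ∀ u ∈ T, G.Adj u v}) ≃g cycleGraph 5) := by
  classical
  have h := crit_of hG hχ
  set N : Set V := {v : V | ∀ u ∈ T, G.Adj u v} with hN
  rw [← Nat.card_coe_set_eq, Nat.card_eq_fintype_card]
  apply exists_pentagon
  · obtain ⟨c, hc, hp⟩ := h.tri T hT
    have hex : ∀ i : Fin 5, ∃ v : N, c v = i := by
      intro i
      obtain ⟨v, -, hcv, hv⟩ := exists_common_neighbor h.not7 hT.card_eq c hc hp i i.2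
      exact ⟨⟨v, hv⟩, hcv⟩
    choose g hg using hex
    have := Fintype.card_le_of_injective g (by
      intro i j hij
      have := hg i
      rw [hij, hg j] at this
      exact Fin.ext this.symm)
    simpa using this
  · rintro ⟨a, ha⟩ ⟨b, hb⟩ ⟨c, hc⟩ hab hac hbc
    simp only [SimpleGraph.comap_adj, Function.Embedding.subtype_apply] at hab hac hbc
    refine h.no_six hcf hnc _ (((hT.insert (a := c) ?_).insert (a := b) ?_).insert (a := a) ?_)
    · exact fun u hu => (hc u hu).symm
    · intro u hu
      rcases Finset.mem_insert.1 hu with rfl | hu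
      exacts [hbc, (hb u hu).symm]
    · intro u hu
      rcases Finset.mem_insert.1 hu with rfl | hu
      · exact hab
      rcases Finset.mem_insert.1 hu with rfl | hu
      exacts [hac, (ha u hu).symm]
  · rintro ⟨a, ha⟩ ⟨b, hb⟩ ⟨c, hc⟩ hab hac hbc nab nac
    simp only [SimpleGraph.comap_adj, Function.Embedding.subtype_apply, ne_eq,
      Subtype.mk.injEq] at hab hac hbc nab nac ⊢
    by_contra nbc
    obtain ⟨t, ht⟩ := Finset.card_pos.1 (show 0 < T.card by rw [hT.card_eq]; omega)
    exact hcf ⟨t, a, b, c, hab, hac, hbc, ha t ht, hb t ht, hc t ht, nab, nac, nbc⟩
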